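/- There exists a constant C > 0 such that for every n ≥ 1 and every ε with 0 < ε < 1, there is a deterministic nonadaptive ε-sampler (Q, g) for the class of permutation branching programs of length n, arbitrary width, and a single accept state, whose query complexity satisfies |Q| ≤ (n/ε)^C. That is, |Q| ≤ (n/ε)^C, g(f) depends only on the restriction of f to Q, and for every w ∈ ℕ and every permutation branching program B of length n and width w with exactly one accept state, |g(B) − Pr[B(U_n)=1]| ≤ ε. -/

import Mathlib

/-- An ordered branching program of length `n` and width `w`: a start state,
a transition function for each layer, and a set of accept states. -/
structure OBP (n w : ℕ) where
  start : Fin w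
  trans : ℕ → Fin w → Bool → Fin w
  accept : Finset (Fin w)

namespace OBP

variable {n w : ℕ}

/-- The state reached from state `v` in layer `i` by walking along the bits of `z`. -/
def walk (B : OBP n w) : ℕ → Fin w → List Bool → Fin w
  | _, v, [] => v
  | i, v, b :: z => B.walk (i + 1) (B.trans i v b) z

/-- `B.eval x = true` iff the walk from the start state along `x` ends at an accept state. -/
def eval (B : OBP n w) (x : Fin n → Bool) : Bool :=
  decide (B.walk 0 B.start (List.ofFn x) ∈ B.accept)

/-- The probability that `B` accepts a uniformly random input. -/
noncomputable def acceptProb (B : OBP n w) : ℝ :=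
  ((Finset.univ.filter fun x : Fin n → Bool => B.eval x = true).card : ℝ) / 2 ^ n

/-- `B` is a permutation branching program: each layer's transitions are permutations. -/
def IsPerm (B : OBP n w) : Prop :=
  ∀ i < n, ∀ b, Function.Bijective fun v => B.trans i v b

/-- The hit set at layer `i` induced by `H`: the states of layer `i` from which the walk
along the last `n - i` bits of some `y ∈ H` reaches an accept state. -/
def hitSet (B : OBP n w) (H : Finset (Fin n → Bool)) (i : ℕ) : Finset (Fin w) :=
  Finset.univ.filter fun v => ∃ y ∈ H, B.walk i v ((List.ofFn y).drop i) ∈ B.accept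

/-- The induced hit function `B_H`: accept iff the walk from the start state stays within
the hit sets at every layer. -/
def hitFun (B : OBP n w) (H : Finset (Fin n → Bool)) (x : Fin n → Bool) : Bool :=
  decide (∀ i ≤ n, B.walk 0 B.start ((List.ofFn x).take i) ∈ B.hitSet H i)

end OBP

/-- The fraction of inputs on which `f` outputs `true`. -/
noncomputable def acceptFrac {n : ℕ} (f : (Fin n → Bool) → Bool) : ℝ :=
  ((Finset.univ.filter fun x : Fin n → Bool => f x = true).card : ℝ) / 2 ^ n

/-- `(Q, g)` is a deterministic nonadaptive `ε`-sampler for the class `F`: the output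
`g f` depends only on the restriction of `f` to `Q`, and estimates the acceptance
probability of every `f ∈ F` to within `ε`. -/
def IsSampler {n : ℕ} (F : Set ((Fin n → Bool) → Bool)) (Q : Finset (Fin n → Bool))
    (g : ((Fin n → Bool) → Bool) → ℝ) (ε : ℝ) : Prop :=
  (∀ f f' : (Fin n → Bool) → Bool, (∀ x ∈ Q, f x = f' x) → g f = g f') ∧
    ∀ f ∈ F, |g f - acceptFrac f| ≤ ε

/-- `H` is a deterministic `ε`-hitter for the class `F`. -/
def IsHitter {n : ℕ} (F : Set ((Fin n → Bool) → Bool)) (H : Finset (Fin n → Bool))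
    (ε : ℝ) : Prop :=
  ∀ f ∈ F, acceptFrac f > ε → ∃ x ∈ H, f x = true

/-- Functions computed by permutation branching programs of length `n` and width `w`. -/
def permClassW (n w : ℕ) : Set ((Fin n → Bool) → Bool) :=
  { f | ∃ B : OBP n w, B.IsPerm ∧ f = B.eval }

/-- Functions computed by permutation branching programs of length `n`, arbitrary width,
with a single accept state. -/
def permClassSingle (n : ℕ) : Set ((Fin n → Bool) → Bool) :=
  { f | ∃ w, ∃ B : OBP n w, B.IsPerm ∧ B.accept.card = 1 ∧ f = B.eval }

/-- Functions computed by permutation branching programs of length `n`, arbitrary width,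
with at most `a` accept states. -/
def permClassA (n a : ℕ) : Set ((Fin n → Bool) → Bool) :=
  { f | ∃ w, ∃ B : OBP n w, B.IsPerm ∧ B.accept.card ≤ a ∧ f = B.eval }

/-- Functions computed by ordered branching programs of length `n` and width `w`. -/
def obpClassW (n w : ℕ) : Set ((Fin n → Bool) → Bool) :=
  { f | ∃ B : OBP n w, f = B.eval }

/-!
Call a state of a permutation program with a single accept state *reached* (*accepting*) if a
random prefix leads to it (a random suffix is accepted from it) with probability more than `δ`.
Because the layers are permutations, the accepted inputs whose walk meets a state that is not
reached, and those whose walk meets a state that is not accepting, each have probability at most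
`δ`.

By double counting, at most `1 / δ` states per layer are accepting, so keeping only these
approximates the program from below by one of width about `1 / δ`. There are few programs of that
width, so greedy covering yields polynomial-size hitters `H i` for every length `i`.

Query all strings `y ++ u ++ z` with `y` and `z` in the hitters and `u` at most one bit. By
induction on the layer, the answers determine where a second program consistent with them stands
after any walk of the first through reached and accepting states. Hence the acceptance
probabilities of two consistent programs differ by at most `2 * δ`, and the acceptance probability
of any consistent program is a valid estimate.
-/

open Finset

section AcceptFrac

variable {m : ℕ}

theorem acceptFrac_nonneg (f : (Fin m → Bool) → Bool) : 0 ≤ acceptFrac f := by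
  unfold acceptFrac
  positivity

theorem acceptFrac_mono {f g : (Fin m → Bool) → Bool} (h : ∀ x, f x = true → g x = true) :
    acceptFrac f ≤ acceptFrac g := by
  unfold acceptFrac
  gcongr ((?_ : ℕ) : ℝ) / _
  exact card_le_card fun x hx => by simpa using h x (by simpa using hx)

theorem acceptFrac_le_one (f : (Fin m → Bool) → Bool) : acceptFrac f ≤ 1 := by
  have h := acceptFrac_mono (g := fun _ => true) fun x (_ : f x = true) => rfl
  simpa [acceptFrac] using h

theorem acceptFrac_or_le (f g : (Fin m → Bool) → Bool) :
    acceptFrac (fun x => f x || g x) ≤ acceptFrac f + acceptFrac g := by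
  simp only [acceptFrac, Bool.or_eq_true, filter_or, ← add_div]
  gcongr
  exact_mod_cast card_union_le _ _

theorem acceptFrac_insertNth (p : Fin (m + 1)) (f : (Fin (m + 1) → Bool) → Bool) :
    acceptFrac f = (acceptFrac (fun x => f (p.insertNth (α := fun _ => Bool) false x)) +
      acceptFrac fun x => f (p.insertNth (α := fun _ => Bool) true x)) / 2 := by
  have hcard : #{x | f x = true} =
      #{x | f (p.insertNth false x) = true} + #{x | f (p.insertNth true x) = true} := by
    simp only [card_filter]
    rw [← (Fin.insertNthEquiv (fun _ => Bool) p).sum_comp, Fintype.sum_prod_type]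
    rw [Fintype.sum_bool, add_comm]
    rfl
  simp only [acceptFrac, hcard]
  push_cast
  rw [pow_succ]
  field_simp

theorem exists_sum_acceptFrac_le_card {ι : Type*} (I : Finset ι)
    (f : ι → (Fin m → Bool) → Bool) :
    ∃ x, ∑ i ∈ I, acceptFrac (f i) ≤ #{i ∈ I | f i x = true} := by
  obtain ⟨x, -, hx⟩ := exists_max_image univ (fun x => #{i ∈ I | f i x = true}) univ_nonempty
  refine ⟨x, ?_⟩
  simp only [acceptFrac]
  rw [← sum_div, div_le_iff₀ (by positivity)]
  have hswap : ∑ i ∈ I, #{x | f i x = true} = ∑ x, #{i ∈ I | f i x = true} :=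
    sum_card_bipartiteAbove_eq_sum_card_bipartiteBelow fun i x => f i x = true
  have hmax := sum_le_card_nsmul univ _ _ hx
  rw [← hswap, card_univ, Fintype.card_fun, Fintype.card_bool, Fintype.card_fin, smul_eq_mul,
    mul_comm] at hmax
  exact_mod_cast hmax

/-- Greedy choice: one point hits an `η`-fraction of the dense functions not hit so far. -/
theorem exists_isHitter_of_card_mul_lt_one (F : Finset ((Fin m → Bool) → Bool)) {η : ℝ}
    (hη : η ≤ 1) {t : ℕ} (hF : #F * (1 - η) ^ t < 1) :
    ∃ H : Finset (Fin m → Bool), #H ≤ t ∧ IsHitter (F : Set ((Fin m → Bool) → Bool)) H η := by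
  induction t generalizing F with
  | zero =>
    obtain rfl : F = ∅ := by simpa using hF
    exact ⟨∅, by simp, by simp [IsHitter]⟩
  | succ t ih =>
    classical
    set D := {f ∈ F | η < acceptFrac f}
    obtain ⟨x, hx⟩ := exists_sum_acceptFrac_le_card D id
    have hdense : #D * η ≤ ∑ f ∈ D, acceptFrac f := by
      rw [← nsmul_eq_mul]
      exact card_nsmul_le_sum _ _ _ fun f hf => (mem_filter.mp hf).2.le
    have hsplit : (#{f ∈ D | f x = true} : ℝ) + #{f ∈ D | ¬ f x = true} = #D := by
      exact_mod_cast card_filter_add_card_filter_not (s := D) fun f => f x = true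
    have hDF : (#D : ℝ) ≤ #F := by exact_mod_cast card_filter_le _ _
    have hmissed : (#{f ∈ D | ¬ f x = true} : ℝ) ≤ #F * (1 - η) := by
      simp only [id] at hx
      nlinarith
    obtain ⟨H, hcard, hH⟩ := ih {f ∈ D | ¬ f x = true} <| by
      refine lt_of_le_of_lt ?_ hF
      rw [pow_succ', ← mul_assoc]
      gcongr
    refine ⟨insert x H, (card_insert_le _ _).trans (by lia), fun f hf hfη => ?_⟩
    by_cases hfx : f x = true
    · exact ⟨x, mem_insert_self _ _, hfx⟩
    · have hf' : f ∈ {f ∈ D | ¬ f x = true} :=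
        mem_filter.mpr ⟨mem_filter.mpr ⟨hf, hfη⟩, hfx⟩
      obtain ⟨y, hy, hfy⟩ := hH f hf' hfη
      exact ⟨y, mem_insert_of_mem hy, hfy⟩

/-- If `Q` determines the acceptance fraction on `F` up to `ε`, then any function of the class
consistent with the answers on `Q` provides the estimate. -/
theorem exists_isSampler {F : Set ((Fin m → Bool) → Bool)} {Q : Finset (Fin m → Bool)} {ε : ℝ}
    (h : ∀ f ∈ F, ∀ f' ∈ F, (∀ x ∈ Q, f x = f' x) → acceptFrac f ≤ acceptFrac f' + ε) :
    ∃ g, IsSampler F Q g ε := by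
  let Consistent (f f₀ : (Fin m → Bool) → Bool) : Prop := f₀ ∈ F ∧ ∀ x ∈ Q, f₀ x = f x
  refine ⟨fun f => acceptFrac (Classical.epsilon (Consistent f)), fun f f' hff' => ?_,
    fun f hf => ?_⟩
  · have : Consistent f = Consistent f' := by
      funext f₀
      exact propext <| and_congr_right fun _ => forall₂_congr fun x hx => by rw [hff' x hx]
    simp only [this]
  · obtain ⟨hF, hQ⟩ : Consistent f (Classical.epsilon (Consistent f)) :=
      Classical.epsilon_spec ⟨f, hf, fun _ _ => rfl⟩
    rw [abs_sub_le_iff]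
    constructor
    · linarith [h _ hF f hf hQ]
    · linarith [h f hf _ hF fun x hx => (hQ x hx).symm]

theorem isSampler_empty {F : Set ((Fin m → Bool) → Bool)} {ε : ℝ} (hε : 1 / 2 ≤ ε) :
    IsSampler F ∅ (fun _ => 1 / 2) ε := by
  refine ⟨fun _ _ _ => rfl, fun f _ => abs_sub_le_iff.mpr ⟨?_, ?_⟩⟩
  · linarith [acceptFrac_nonneg f]
  · linarith [acceptFrac_le_one f]

end AcceptFrac

section BitProb

variable {m : ℕ}

open Classical in
/-- The probability that a uniformly random bit string of length `m` satisfies `φ`. Strings are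
lists, as in `OBP.walk`, so that they can be cut and glued. -/
noncomputable def bitProb (m : ℕ) (φ : List Bool → Prop) : ℝ :=
  acceptFrac fun x : Fin m → Bool => decide (φ (List.ofFn x))

theorem acceptFrac_eq_bitProb {f : (Fin m → Bool) → Bool} {φ : List Bool → Prop}
    (h : ∀ x, f x = true ↔ φ (List.ofFn x)) : acceptFrac f = bitProb m φ := by
  simp only [bitProb, ← h, Bool.decide_eq_true]

theorem bitProb_mono {φ ψ : List Bool → Prop} (h : ∀ z, z.length = m → φ z → ψ z) :
    bitProb m φ ≤ bitProb m ψ :=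
  acceptFrac_mono fun x => by simpa using h (List.ofFn x) List.length_ofFn

theorem bitProb_eq_zero {φ : List Bool → Prop} (h : ∀ z, z.length = m → ¬ φ z) :
    bitProb m φ = 0 := by
  simp [bitProb, acceptFrac, h]

theorem bitProb_or_le (φ ψ : List Bool → Prop) :
    bitProb m (fun z => φ z ∨ ψ z) ≤ bitProb m φ + bitProb m ψ := by
  classical
  refine le_trans (le_of_eq ?_) (acceptFrac_or_le _ _)
  exact (acceptFrac_eq_bitProb fun x => by simp).symm

theorem bitProb_cons (φ : List Bool → Prop) :
    bitProb (m + 1) φ =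
      (bitProb m (fun z => φ (false :: z)) + bitProb m fun z => φ (true :: z)) / 2 := by
  rw [bitProb, acceptFrac_insertNth 0]
  congr 2 <;> exact acceptFrac_eq_bitProb fun x => by simp

theorem bitProb_concat (φ : List Bool → Prop) :
    bitProb (m + 1) φ =
      (bitProb m (fun z => φ (z ++ [false])) + bitProb m fun z => φ (z ++ [true])) / 2 := by
  rw [bitProb, acceptFrac_insertNth (Fin.last m)]
  congr 2 <;> exact acceptFrac_eq_bitProb fun x => by simp [-List.ofFn_succ, List.ofFn_succ']

end BitProb

namespace OBP

variable {n n' w k m : ℕ} {B : OBP n w} {δ : ℝ}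

section Walk

theorem walk_append (B : OBP n w) (i : ℕ) (v : Fin w) (y z : List Bool) :
    B.walk i v (y ++ z) = B.walk (i + y.length) (B.walk i v y) z := by
  induction y generalizing i v with
  | nil => rfl
  | cons b y ih =>
    rw [List.cons_append, walk, ih, walk, List.length_cons, add_assoc, add_comm 1]

theorem walk_congr {B' : OBP n' w} {i j : ℕ} {z : List Bool}
    (h : ∀ k < z.length, B.trans (i + k) = B'.trans (j + k)) (v : Fin w) :
    B.walk i v z = B'.walk j v z := by
  induction z generalizing i j v with
  | nil => rfl
  | cons b z ih =>
    have hhead : B.trans i = B'.trans j := h 0 (by simp)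
    rw [walk, walk, hhead]
    refine ih (fun k hk => ?_) _
    simpa only [add_assoc, add_comm 1] using h (k + 1) (by simpa using hk)

theorem IsPerm.walk_injective (hB : B.IsPerm) {i : ℕ} {z : List Bool} (hz : z.length ≤ n - i) :
    Function.Injective fun v => B.walk i v z := by
  induction z generalizing i with
  | nil => exact Function.injective_id
  | cons b z ih =>
    rw [List.length_cons] at hz
    exact (ih (by lia)).comp (hB i (by lia) b).injective

theorem IsPerm.eq_of_walk_mem_accept (hB : B.IsPerm) (hacc : #B.accept ≤ 1) {i : ℕ}
    {u v : Fin w} {z : List Bool} (hz : z.length ≤ n - i) (hu : B.walk i u z ∈ B.accept)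
    (hv : B.walk i v z ∈ B.accept) : u = v :=
  hB.walk_injective hz (card_le_one.mp hacc _ hu _ hv)

theorem eval_eq_true_iff (B : OBP n w) (x : Fin n → Bool) :
    B.eval x = true ↔ B.walk 0 B.start (List.ofFn x) ∈ B.accept :=
  decide_eq_true_iff

/-- The walk from state `v` of layer `i` along `z` visits only states satisfying `G`, the two
endpoints included. -/
def StaysIn (B : OBP n w) (G : ℕ → Fin w → Prop) : ℕ → Fin w → List Bool → Prop
  | i, v, [] => G i v
  | i, v, b :: z => G i v ∧ B.StaysIn G (i + 1) (B.trans i v b) z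

variable {G : ℕ → Fin w → Prop} {i : ℕ} {v : Fin w} {z : List Bool}

theorem StaysIn.start (h : B.StaysIn G i v z) : G i v := by
  cases z with
  | nil => exact h
  | cons b z => exact h.1

theorem staysIn_append (y : List Bool) : B.StaysIn G i v (y ++ z) ↔
    B.StaysIn G i v y ∧ B.StaysIn G (i + y.length) (B.walk i v y) z := by
  induction y generalizing i v with
  | nil => exact ⟨fun h => ⟨h.start, h⟩, And.right⟩
  | cons b y ih =>
    simp only [List.cons_append, StaysIn, ih, walk, List.length_cons, and_assoc, add_assoc,
      add_comm 1]

theorem StaysIn.finish (h : B.StaysIn G i v z) : G (i + z.length) (B.walk i v z) :=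
  ((staysIn_append (z := []) z).mp (by simpa using h)).2

end Walk

section Heavy

/-- The probability that a uniformly random input leads from the start state to state `v` of
layer `i`. -/
noncomputable def reachProb (B : OBP n w) (i : ℕ) (v : Fin w) : ℝ :=
  bitProb i fun z => B.walk 0 B.start z = v

/-- The probability that a uniformly random input is accepted from state `v` of layer `i`. -/
noncomputable def acceptProbFrom (B : OBP n w) (i : ℕ) (v : Fin w) : ℝ :=
  bitProb (n - i) fun z => B.walk i v z ∈ B.accept

/-- The program formed by the first `i` layers of `B`, with `v` as its only accept state. -/
def initial (B : OBP n w) (i : ℕ) (v : Fin w) : OBP i w where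
  start := B.start
  trans := B.trans
  accept := {v}

/-- The program formed by the layers of `B` from `i` on, started in `v`. -/
def final (B : OBP n w) (i : ℕ) (v : Fin w) : OBP (n - i) w where
  start := v
  trans j := B.trans (i + j)
  accept := B.accept

theorem eval_initial_eq_true_iff (B : OBP n w) (i : ℕ) (v : Fin w) (x : Fin i → Bool) :
    (B.initial i v).eval x = true ↔ B.walk 0 B.start (List.ofFn x) = v := by
  have hwalk : (B.initial i v).walk 0 B.start (List.ofFn x) = B.walk 0 B.start (List.ofFn x) :=
    walk_congr (B := B.initial i v) (B' := B) (fun _ _ => rfl) _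
  rw [eval_eq_true_iff, ← hwalk]
  exact mem_singleton

theorem eval_final_eq_true_iff (B : OBP n w) (i : ℕ) (v : Fin w) (x : Fin (n - i) → Bool) :
    (B.final i v).eval x = true ↔ B.walk i v (List.ofFn x) ∈ B.accept := by
  have hwalk : (B.final i v).walk 0 v (List.ofFn x) = B.walk i v (List.ofFn x) :=
    walk_congr (fun k _ => by simp [final]) _
  rw [eval_eq_true_iff, ← hwalk]
  rfl

theorem acceptFrac_eval_initial (B : OBP n w) (i : ℕ) (v : Fin w) :
    acceptFrac (B.initial i v).eval = B.reachProb i v :=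
  acceptFrac_eq_bitProb (B.eval_initial_eq_true_iff i v)

theorem acceptFrac_eval_final (B : OBP n w) (i : ℕ) (v : Fin w) :
    acceptFrac (B.final i v).eval = B.acceptProbFrom i v :=
  acceptFrac_eq_bitProb (B.eval_final_eq_true_iff i v)

theorem IsPerm.initial (hB : B.IsPerm) {i : ℕ} (hi : i ≤ n) (v : Fin w) : (B.initial i v).IsPerm :=
  fun j hj => hB j (hj.trans_le hi)

theorem IsPerm.final (hB : B.IsPerm) (i : ℕ) (v : Fin w) : (B.final i v).IsPerm :=
  fun j hj => hB (i + j) (by lia)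

theorem bitProb_accept_and_not_staysIn_le (B : OBP n w) (hδ : 0 ≤ δ) {i : ℕ} (him : i + m = n)
    (v : Fin w) :
    bitProb m (fun z => B.walk i v z ∈ B.accept ∧
      ¬ B.StaysIn (fun j u => δ < B.acceptProbFrom j u) i v z) ≤ δ := by
  induction m generalizing i v with
  | zero =>
    by_cases hv : δ < B.acceptProbFrom i v
    · rw [bitProb_eq_zero fun z hz h => h.2 (by rwa [List.length_eq_zero_iff.mp hz])]
      exact hδ
    · refine (bitProb_mono fun z _ h => h.1).trans ?_
      simpa [acceptProbFrom, ← him] using hv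
  | succ m ih =>
    by_cases hv : δ < B.acceptProbFrom i v
    · have hfalse := ih (i := i + 1) (by lia) (B.trans i v false)
      have htrue := ih (i := i + 1) (by lia) (B.trans i v true)
      simp only [bitProb_cons, walk, StaysIn, hv, true_and]
      linarith
    · refine (bitProb_mono fun z _ h => h.1).trans ?_
      simpa [acceptProbFrom, ← him] using hv

/-- Since each layer is a permutation, `u` has one predecessor for each value of the last bit, and
the loss at `u` is at most the average of the losses at the two predecessors. -/
theorem IsPerm.bitProb_reach_and_not_staysIn_le (hB : B.IsPerm) (hδ : 0 ≤ δ) (hm : m ≤ n)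
    (u : Fin w) :
    bitProb m (fun z => B.walk 0 B.start z = u ∧
      ¬ B.StaysIn (fun j v => δ < B.reachProb j v) 0 B.start z) ≤ δ := by
  induction m generalizing u with
  | zero =>
    by_cases hu : δ < B.reachProb 0 u
    · rw [bitProb_eq_zero]
      · exact hδ
      · rintro z hz ⟨rfl, h⟩
        obtain rfl := List.length_eq_zero_iff.mp hz
        exact h hu
    · exact (bitProb_mono fun z _ h => h.1).trans (not_lt.mp hu)
  | succ m ih =>
    by_cases hu : δ < B.reachProb (m + 1) u
    · have hlast (b : Bool) : bitProb m (fun z => B.walk 0 B.start (z ++ [b]) = u ∧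
          ¬ B.StaysIn (fun j v => δ < B.reachProb j v) 0 B.start (z ++ [b])) ≤ δ := by
        obtain ⟨v, hv⟩ := (hB m hm b).surjective u
        refine (bitProb_mono fun z hz h => ?_).trans (ih (by lia) v)
        simp only [walk_append, staysIn_append, zero_add, hz, walk, StaysIn] at h
        refine ⟨(hB m hm b).injective (h.1.trans hv.symm), fun hs => h.2 ⟨hs, ?_, ?_⟩⟩
        · simpa [hz] using hs.finish
        · rwa [h.1]
      rw [bitProb_concat]
      linarith [hlast false, hlast true]
    · exact (bitProb_mono fun z _ h => h.1).trans (not_lt.mp hu)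

open Classical in
theorem IsPerm.card_heavy_le (hB : B.IsPerm) (hδ : 0 < δ) (i : ℕ) :
    #{v | δ < B.acceptProbFrom i v} ≤ ⌊#B.accept / δ⌋₊ := by
  set S : Finset (Fin w) := {v | δ < B.acceptProbFrom i v}
  obtain ⟨x, hx⟩ := exists_sum_acceptFrac_le_card S fun v => (B.final i v).eval
  simp only [acceptFrac_eval_final, eval_final_eq_true_iff] at hx
  have hinj : #{v ∈ S | B.walk i v (List.ofFn x) ∈ B.accept} ≤ #B.accept :=
    card_le_card_of_injOn (fun v => B.walk i v (List.ofFn x))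
      (fun v hv => (mem_filter.mp hv).2)
      (hB.walk_injective (by rw [List.length_ofFn])).injOn
  have hsum : #S * δ ≤ ∑ v ∈ S, B.acceptProbFrom i v := by
    rw [← nsmul_eq_mul]
    exact card_nsmul_le_sum _ _ _ fun v hv => (mem_filter.mp hv).2.le
  exact Nat.le_floor ((le_div_iff₀ hδ).mpr (hsum.trans (hx.trans (by exact_mod_cast hinj))))

end Heavy

section Compress

variable (B) (G : ℕ → Fin w → Prop) (e : ∀ i, {v // G i v} ↪ Fin k)

/-- The state of `B.compress G e` standing for state `v` of layer `i`; all states outside `G` are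
represented by the dead state `0`. -/
noncomputable def code (i : ℕ) : Fin w → Fin (k + 1) :=
  Function.extend Subtype.val (Fin.succ ∘ e i) 0

open Classical in
/-- The program of width `k + 1` that simulates `B` as long as the walk stays in `G`, using an
enumeration `e i` of the at most `k` states of layer `i` in `G`, and rejects once it leaves `G`. -/
noncomputable def compress : OBP n (k + 1) where
  start := code G e 0 B.start
  trans i c b := Function.extend (Fin.succ ∘ e i) (fun v => code G e (i + 1) (B.trans i v b)) 0 c
  accept := ({v ∈ B.accept | G n v} : Finset (Fin w)).image (code G e n)

variable {G} {i : ℕ} {v : Fin w}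

theorem code_of_mem (hv : G i v) : code G e i v = (e i ⟨v, hv⟩).succ :=
  Subtype.val_injective.extend_apply _ _ (⟨v, hv⟩ : {v // G i v})

theorem code_inj {u : Fin w} (hu : G i u) (hv : G i v) :
    code G e i u = code G e i v ↔ u = v := by
  simp [code_of_mem e, hu, hv]

theorem code_of_notMem (hv : ¬ G i v) : code G e i v = 0 :=
  Function.extend_apply' _ _ _ (by simpa using hv)

theorem compress_trans_code (hv : G i v) (b : Bool) :
    (B.compress G e).trans i (code G e i v) b = code G e (i + 1) (B.trans i v b) := by
  rw [code_of_mem e hv]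
  exact ((Fin.succ_injective k).comp (e i).injective).extend_apply
    (fun v => code G e (i + 1) (B.trans i v b)) 0 ⟨v, hv⟩

theorem walk_compress_zero (i : ℕ) (z : List Bool) : (B.compress G e).walk i 0 z = 0 := by
  induction z generalizing i with
  | nil => rfl
  | cons b z ih =>
    have hdead : (B.compress G e).trans i 0 b = 0 := by
      simp only [compress]
      exact Function.extend_apply' _ _ _ fun ⟨v, hv⟩ => Fin.succ_ne_zero _ hv
    rw [walk, hdead, ih]

theorem walk_compress_of_staysIn {z : List Bool} (h : B.StaysIn G i v z) :
    (B.compress G e).walk i (code G e i v) z = code G e (i + z.length) (B.walk i v z) := by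
  induction z generalizing i v with
  | nil => rfl
  | cons b z ih =>
    rw [walk, compress_trans_code B e h.start, ih h.2, walk, List.length_cons, add_assoc,
      add_comm 1]

theorem walk_compress_of_not_staysIn {z : List Bool} (h : ¬ B.StaysIn G i v z) :
    (B.compress G e).walk i (code G e i v) z = 0 := by
  induction z generalizing i v with
  | nil => exact code_of_notMem e h
  | cons b z ih =>
    by_cases hv : G i v
    · rw [walk, compress_trans_code B e hv, ih fun hz => h ⟨hv, hz⟩]
    · rw [code_of_notMem e hv, walk_compress_zero]

theorem eval_compress_eq_true_iff (x : Fin n → Bool) : (B.compress G e).eval x = true ↔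
    B.walk 0 B.start (List.ofFn x) ∈ B.accept ∧ B.StaysIn G 0 B.start (List.ofFn x) := by
  have hmem (c : Fin (k + 1)) : c ∈ (B.compress G e).accept ↔
      ∃ v ∈ B.accept, G n v ∧ code G e n v = c := by
    simp [compress, and_assoc]
  rw [eval_eq_true_iff, hmem]
  by_cases hs : B.StaysIn G 0 B.start (List.ofFn x)
  · have hend : G n (B.walk 0 B.start (List.ofFn x)) := by simpa using hs.finish
    have hwalk := walk_compress_of_staysIn B e hs
    rw [zero_add, List.length_ofFn] at hwalk
    simp only [hs, and_true]
    constructor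
    · rintro ⟨v, hv, hGv, hcode⟩
      rwa [← (code_inj e hGv hend).mp (hcode.trans hwalk)]
    · exact fun h => ⟨_, h, hend, hwalk.symm⟩
  · simp only [hs, and_false, iff_false]
    rintro ⟨v, -, hGv, hcode⟩
    rw [code_of_mem e hGv] at hcode
    exact Fin.succ_ne_zero _ (hcode.trans (walk_compress_of_not_staysIn B e hs))

end Compress

end OBP

section Hitter

namespace OBP

variable {n w i : ℕ} {B : OBP n w} {δ : ℝ} {v : Fin w}

theorem IsPerm.exists_mem_walk_eq (hB : B.IsPerm) (hi : i ≤ n) {H : Finset (Fin i → Bool)}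
    (hH : IsHitter (permClassSingle i) H δ) (hv : δ < B.reachProb i v) :
    ∃ x ∈ H, B.walk 0 B.start (List.ofFn x) = v := by
  obtain ⟨x, hx, hxv⟩ := hH _ ⟨w, B.initial i v, hB.initial hi v, card_singleton v, rfl⟩
    (by rwa [acceptFrac_eval_initial])
  exact ⟨x, hx, (B.eval_initial_eq_true_iff i v x).mp hxv⟩

theorem IsPerm.exists_mem_walk_mem_accept (hB : B.IsPerm) (hacc : #B.accept = 1)
    {H : Finset (Fin (n - i) → Bool)} (hH : IsHitter (permClassSingle (n - i)) H δ)
    (hv : δ < B.acceptProbFrom i v) : ∃ y ∈ H, B.walk i v (List.ofFn y) ∈ B.accept := by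
  obtain ⟨y, hy, hyv⟩ := hH _ ⟨w, B.final i v, hB.final i v, hacc, rfl⟩
    (by rwa [acceptFrac_eval_final])
  exact ⟨y, hy, (B.eval_final_eq_true_iff i v y).mp hyv⟩

end OBP

theorem ncard_obpClassW_le (n w : ℕ) : (obpClassW n w).ncard ≤ w * 2 ^ w * (w ^ (2 * w)) ^ n := by
  let table (p : (Fin w × Finset (Fin w)) × (Fin n → Fin w → Bool → Fin w)) : OBP n w :=
    ⟨p.1.1, fun i v b => if h : i < n then p.2 ⟨i, h⟩ v b else v, p.1.2⟩
  have hsub : obpClassW n w ⊆ Set.range fun p => (table p).eval := by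
    rintro _ ⟨B, rfl⟩
    refine ⟨((B.start, B.accept), fun i => B.trans i), funext fun x => ?_⟩
    have hwalk := OBP.walk_congr (B := table ((B.start, B.accept), fun i => B.trans i)) (B' := B)
      (i := 0) (j := 0) (z := List.ofFn x) (fun k hk => by
        rw [List.length_ofFn] at hk
        simp [table, hk]) B.start
    simp only [OBP.eval]
    rw [← hwalk]
  calc (obpClassW n w).ncard ≤ (Set.range fun p => (table p).eval).ncard :=
        Set.ncard_le_ncard hsub
    _ ≤ Fintype.card ((Fin w × Finset (Fin w)) × (Fin n → Fin w → Bool → Fin w)) := by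
        rw [← Set.image_univ, ← Nat.card_eq_fintype_card, ← Set.ncard_univ]
        exact Set.ncard_image_le
    _ = w * 2 ^ w * (w ^ (2 * w)) ^ n := by
        simp [pow_mul, pow_right_comm]

theorem exists_mem_obpClassW_approx {n : ℕ} {f : (Fin n → Bool) → Bool}
    (hf : f ∈ permClassSingle n) {η : ℝ} (hη : 0 < η) :
    ∃ f' ∈ obpClassW n (⌊1 / η⌋₊ + 1),
      (∀ x, f' x = true → f x = true) ∧ acceptFrac f ≤ acceptFrac f' + η := by
  classical
  obtain ⟨w, B, hB, hacc, rfl⟩ := hf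
  let G i v := η < B.acceptProbFrom i v
  have hcode (i : ℕ) : Nonempty ({v // G i v} ↪ Fin ⌊1 / η⌋₊) := by
    refine Function.Embedding.nonempty_of_card_le ?_
    simpa [Fintype.card_subtype, hacc] using hB.card_heavy_le hη i
  let e i := (hcode i).some
  refine ⟨(B.compress G e).eval, ⟨_, rfl⟩, fun x hx => ?_, ?_⟩
  · exact (B.eval_eq_true_iff x).mpr ((B.eval_compress_eq_true_iff e x).mp hx).1
  let Acc z := B.walk 0 B.start z ∈ B.accept
  let Stays z := B.StaysIn G 0 B.start z
  rw [acceptFrac_eq_bitProb (φ := Acc) B.eval_eq_true_iff,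
    acceptFrac_eq_bitProb (φ := fun z => Acc z ∧ Stays z) (B.eval_compress_eq_true_iff e)]
  calc bitProb n Acc ≤ bitProb n fun z => (Acc z ∧ Stays z) ∨ (Acc z ∧ ¬ Stays z) :=
        bitProb_mono fun z _ h => by tauto
    _ ≤ bitProb n (fun z => Acc z ∧ Stays z) + bitProb n (fun z => Acc z ∧ ¬ Stays z) :=
        bitProb_or_le _ _
    _ ≤ bitProb n (fun z => Acc z ∧ Stays z) + η := by
        gcongr
        exact B.bitProb_accept_and_not_staysIn_le hη.le (zero_add n) B.start

theorem card_obpClassW_mul_one_sub_pow_lt_one (m : ℕ) {η : ℝ} (hη : 0 < η) (hη1 : η ≤ 1) :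
    ((obpClassW m (⌊1 / η⌋₊ + 1)).ncard : ℝ) *
      (1 - η) ^ (2 * (⌊1 / η⌋₊ + 1) ^ 3 * (m + 1)) < 1 := by
  set w := ⌊1 / η⌋₊ + 1
  have hw1 : (1 : ℝ) ≤ w := by simp [w]
  have hηw : 1 < η * w := by
    rw [mul_comm, ← div_lt_iff₀ hη]
    simpa [w] using Nat.lt_floor_add_one (1 / η)
  have hw : (w : ℝ) ≤ Real.exp w := by linarith [Real.add_one_le_exp (w : ℝ)]
  have htwo : (2 : ℝ) ^ w ≤ Real.exp w := by
    rw [← Real.exp_one_pow]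
    gcongr
    linarith [Real.add_one_le_exp (1 : ℝ)]
  have hcard : ((obpClassW m w).ncard : ℝ) ≤ Real.exp (2 * w ^ 2 * (m + 1)) :=
    calc ((obpClassW m w).ncard : ℝ) ≤ w * 2 ^ w * (w ^ (2 * w)) ^ m := by
          exact_mod_cast ncard_obpClassW_le m w
      _ ≤ Real.exp w * Real.exp w * (Real.exp w ^ (2 * w)) ^ m := by gcongr
      _ = Real.exp (2 * w + 2 * w ^ 2 * m) := by
          rw [← pow_mul, ← Real.exp_nat_mul, ← Real.exp_add, ← Real.exp_add]
          push_cast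
          ring_nf
      _ ≤ Real.exp (2 * w ^ 2 * (m + 1)) := by
          gcongr
          nlinarith
  calc ((obpClassW m w).ncard : ℝ) * (1 - η) ^ (2 * w ^ 3 * (m + 1))
      ≤ Real.exp (2 * w ^ 2 * (m + 1)) * Real.exp (-η) ^ (2 * w ^ 3 * (m + 1)) := by
        gcongr
        exact Real.one_sub_le_exp_neg η
    _ = Real.exp (2 * w ^ 2 * (m + 1) * (1 - η * w)) := by
        rw [← Real.exp_nat_mul, ← Real.exp_add]
        push_cast
        ring_nf
    _ < 1 := Real.exp_lt_one_iff.mpr (mul_neg_of_pos_of_neg (by positivity) (by linarith))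

theorem exists_isHitter_permClassSingle (m : ℕ) {η : ℝ} (hη : 0 < η) (hη1 : η ≤ 1) :
    ∃ H, #H ≤ 2 * (⌊1 / η⌋₊ + 1) ^ 3 * (m + 1) ∧ IsHitter (permClassSingle m) H (2 * η) := by
  set w := ⌊1 / η⌋₊ + 1
  have hfin := Set.toFinite (obpClassW m w)
  obtain ⟨H, hcard, hH⟩ := exists_isHitter_of_card_mul_lt_one hfin.toFinset hη1
    (t := 2 * w ^ 3 * (m + 1)) (by
      rw [← Set.ncard_eq_toFinset_card _ hfin]
      exact card_obpClassW_mul_one_sub_pow_lt_one m hη hη1)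
  refine ⟨H, hcard, fun f hf hfη => ?_⟩
  obtain ⟨f', hf', hle, happrox⟩ := exists_mem_obpClassW_approx hf hη
  obtain ⟨x, hx, hfx⟩ := hH f' (hfin.mem_toFinset.mpr hf') (by linarith)
  exact ⟨x, hx, hle x hfx⟩

end Hitter

section Glue

variable {n t : ℕ}

theorem exists_ofFn_eq {z : List Bool} (hz : z.length = n) :
    ∃ x : Fin n → Bool, List.ofFn x = z := by
  subst hz
  exact ⟨z.get, List.ofFn_get z⟩

open Classical in
/-- The strings of length `n` of the form `y ++ u ++ z` where `y` and `z` come from the family `H`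
and `u` has at most one bit. -/
noncomputable def glued (H : ∀ i, Finset (Fin i → Bool)) (n : ℕ) : Finset (Fin n → Bool) :=
  {x | ∃ i j, ∃ y ∈ H i, ∃ z ∈ H j, ∃ u : List Bool, u.length ≤ 1 ∧
    List.ofFn x = List.ofFn y ++ u ++ List.ofFn z}

theorem mem_glued {H : ∀ i, Finset (Fin i → Bool)} {x : Fin n → Bool} : x ∈ glued H n ↔
    ∃ i j, ∃ y ∈ H i, ∃ z ∈ H j, ∃ u : List Bool, u.length ≤ 1 ∧
      List.ofFn x = List.ofFn y ++ u ++ List.ofFn z := by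
  simp [glued]

theorem card_glued_le {H : ∀ i, Finset (Fin i → Bool)} (hH : ∀ i ≤ n, #(H i) ≤ t) :
    #(glued H n) ≤ 3 * (n + 1) * t ^ 2 := by
  let U : Finset (List Bool) := {[], [false], [true]}
  let parts (p : ℕ × List Bool) : Finset (List Bool) :=
    image₂ (fun y z => List.ofFn y ++ p.2 ++ List.ofFn z) (H p.1) (H (n - p.1 - p.2.length))
  have hsub : (glued H n).image List.ofFn ⊆ (range (n + 1) ×ˢ U).biUnion parts := by
    rintro _ hs
    obtain ⟨x, hx, rfl⟩ := mem_image.mp hs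
    obtain ⟨i, j, y, hy, z, hz, u, hu, hxyz⟩ := mem_glued.mp hx
    have hlen : n = i + u.length + j := by simpa [add_assoc] using congrArg List.length hxyz
    obtain rfl : n - i - u.length = j := by lia
    have huU : u ∈ U := by
      rcases u with _ | ⟨_ | _, _ | _⟩ <;> grind
    rw [hxyz]
    refine mem_biUnion.mpr ⟨(i, u), mem_product.mpr ⟨mem_range.mpr (by lia), huU⟩, ?_⟩
    exact mem_image₂_of_mem hy hz
  have hparts (p) (hp : p ∈ range (n + 1) ×ˢ U) : #(parts p) ≤ t ^ 2 := by
    have hp1 : p.1 ≤ n := by simpa [Nat.lt_succ_iff] using (mem_product.mp hp).1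
    rw [sq]
    exact (card_image₂_le _ _ _).trans (Nat.mul_le_mul (hH _ hp1) (hH _ (by lia)))
  calc #(glued H n) = #((glued H n).image List.ofFn) :=
        (card_image_of_injective _ List.ofFn_injective).symm
    _ ≤ #((range (n + 1) ×ˢ U).biUnion parts) := card_le_card hsub
    _ ≤ #(range (n + 1) ×ˢ U) * t ^ 2 := card_biUnion_le_card_mul _ _ _ hparts
    _ = 3 * (n + 1) * t ^ 2 := by
        rw [card_product, card_range, show #U = 3 from rfl, mul_comm 3]

namespace OBP

variable {w w' : ℕ} {B : OBP n w} {B' : OBP n w'} {δ : ℝ} {H : ∀ i, Finset (Fin i → Bool)}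

theorem walk_mem_accept_of_agree
    (hagree : ∀ x ∈ glued H n, B.eval x = true → B'.eval x = true)
    {i j : ℕ} {y : Fin i → Bool} (hy : y ∈ H i) {z : Fin j → Bool} (hz : z ∈ H j) {u : List Bool}
    (hu : u.length ≤ 1) (hn : i + u.length + j = n)
    (hacc : B.walk 0 B.start (List.ofFn y ++ u ++ List.ofFn z) ∈ B.accept) :
    B'.walk 0 B'.start (List.ofFn y ++ u ++ List.ofFn z) ∈ B'.accept := by
  obtain ⟨x, hx⟩ := exists_ofFn_eq (n := n) (z := List.ofFn y ++ u ++ List.ofFn z)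
    (by simpa [add_assoc] using hn)
  rw [← hx, ← eval_eq_true_iff] at hacc ⊢
  exact hagree x (mem_glued.mpr ⟨i, j, y, hy, z, hz, u, hu, hx⟩) hacc

variable (hB : B.IsPerm) (hB' : B'.IsPerm) (hacc : #B.accept = 1) (hacc' : #B'.accept ≤ 1)
  (hH : ∀ i ≤ n, IsHitter (permClassSingle i) (H i) δ)
  (hagree : ∀ x ∈ glued H n, B.eval x = true → B'.eval x = true)

include hB hB' hacc hacc' hH hagree

/-- Induction on `p`: write `p = p₀ ++ [b]` and take `x₀ ∈ H p₀.length` reaching the same state as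
`p₀`. For a suffix `y` accepted after `p`, both `x ++ y` and `x₀ ++ [b] ++ y` are glued strings that
`B` accepts, hence `B'` too, and in a permutation program with one accept state `y` is accepted from
one state only. -/
theorem walk_eq_walk_of_agree {p : List Bool} (hp : p.length ≤ n)
    (hreach : B.StaysIn (fun i v => δ < B.reachProb i v) 0 B.start p)
    (haccept : B.StaysIn (fun i v => δ < B.acceptProbFrom i v) 0 B.start p)
    {x : Fin p.length → Bool} (hx : x ∈ H p.length)
    (hxp : B.walk 0 B.start (List.ofFn x) = B.walk 0 B.start p) :
    B'.walk 0 B'.start (List.ofFn x) = B'.walk 0 B'.start p := by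
  induction p using List.reverseRecOn with
  | nil => simp
  | append_singleton p b ih =>
    have hlen : (p ++ [b]).length = p.length + 1 := by simp
    obtain ⟨y, hy, hyacc⟩ := hB.exists_mem_walk_mem_accept hacc
      (hH (n - (p ++ [b]).length) (by lia)) (by simpa only [zero_add] using haccept.finish)
    have hreach₀ := ((staysIn_append p).mp hreach).1
    obtain ⟨x₀, hx₀, hx₀p⟩ := hB.exists_mem_walk_eq (by lia) (hH p.length (by lia))
      (by simpa only [zero_add] using hreach₀.finish)
    have ih := ih (by lia) hreach₀ ((staysIn_append p).mp haccept).1 hx₀ hx₀p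
    have hext {w : ℕ} {A : OBP n w}
        (h : A.walk 0 A.start (List.ofFn x₀) = A.walk 0 A.start p) :
        A.walk 0 A.start (List.ofFn x₀ ++ [b] ++ List.ofFn y) =
          A.walk (p ++ [b]).length (A.walk 0 A.start (p ++ [b])) (List.ofFn y) := by
      simp only [walk_append, h, zero_add, List.length_append, List.length_ofFn]
    have hx_acc : B'.walk 0 B'.start (List.ofFn x ++ [] ++ List.ofFn y) ∈ B'.accept := by
      refine walk_mem_accept_of_agree hagree hx hy (by simp) (by simp; lia) ?_
      rwa [List.append_nil, walk_append, hxp, zero_add, List.length_ofFn]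
    have hx₀_acc : B'.walk 0 B'.start (List.ofFn x₀ ++ [b] ++ List.ofFn y) ∈ B'.accept := by
      refine walk_mem_accept_of_agree hagree hx₀ hy (by simp) (by simp; lia) ?_
      rwa [hext hx₀p]
    rw [List.append_nil, walk_append, zero_add, List.length_ofFn] at hx_acc
    rw [hext ih] at hx₀_acc
    exact hB'.eq_of_walk_mem_accept hacc' (List.length_ofFn).le hx_acc hx₀_acc

theorem acceptFrac_le_of_agree (hδ : 0 ≤ δ) :
    acceptFrac B.eval ≤ acceptFrac B'.eval + 2 * δ := by
  let Reach := B.StaysIn (fun i v => δ < B.reachProb i v) 0 B.start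
  let Accept := B.StaysIn (fun i v => δ < B.acceptProbFrom i v) 0 B.start
  let Acc z := B.walk 0 B.start z ∈ B.accept
  let Acc' z := B'.walk 0 B'.start z ∈ B'.accept
  have hagreed (z : List Bool) (hz : z.length = n) (hAcc : Acc z) (hR : Reach z)
      (hA : Accept z) : Acc' z := by
    obtain ⟨x, hx, hxz⟩ := hB.exists_mem_walk_eq hz.le (hH z.length hz.le)
      (by simpa only [zero_add] using hR.finish)
    obtain ⟨y, hy, -⟩ := hB.exists_mem_walk_mem_accept hacc (hH (n - z.length) (by lia))
      (by simpa only [zero_add] using hA.finish)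
    have hy0 : List.ofFn y = [] := by simp [hz]
    have h := walk_mem_accept_of_agree hagree hx hy (u := []) (by simp) (by simp; lia)
      (by simpa [hy0, hxz] using hAcc)
    rw [List.append_nil, hy0, List.append_nil,
      walk_eq_walk_of_agree hB hB' hacc hacc' hH hagree hz.le hR hA hx hxz] at h
    exact h
  have hlost : bitProb n (fun z => Acc z ∧ ¬ Accept z) ≤ δ :=
    B.bitProb_accept_and_not_staysIn_le hδ (zero_add n) B.start
  have hlost' : bitProb n (fun z => Acc z ∧ ¬ Reach z) ≤ δ := by
    obtain ⟨u, hu⟩ := card_eq_one.mp hacc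
    simpa only [Acc, hu, mem_singleton] using hB.bitProb_reach_and_not_staysIn_le hδ le_rfl u
  rw [acceptFrac_eq_bitProb (φ := Acc) B.eval_eq_true_iff,
    acceptFrac_eq_bitProb (φ := Acc') B'.eval_eq_true_iff]
  calc bitProb n Acc
      ≤ bitProb n fun z => Acc' z ∨ (Acc z ∧ ¬ Accept z) ∨ (Acc z ∧ ¬ Reach z) :=
        bitProb_mono fun z hz h => by
          have := hagreed z hz h
          tauto
    _ ≤ bitProb n Acc' + (bitProb n (fun z => Acc z ∧ ¬ Accept z) +
          bitProb n fun z => Acc z ∧ ¬ Reach z) :=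
        (bitProb_or_le _ _).trans (by gcongr; exact bitProb_or_le _ _)
    _ ≤ bitProb n Acc' + 2 * δ := by linarith

end OBP

end Glue

theorem exists_isSampler_permClassSingle (n : ℕ) {η : ℝ} (hη : 0 < η) (hη1 : η ≤ 1) :
    ∃ (Q : Finset (Fin n → Bool)) (g : ((Fin n → Bool) → Bool) → ℝ),
      IsSampler (permClassSingle n) Q g (4 * η) ∧
        #Q ≤ 3 * (n + 1) * (2 * (⌊1 / η⌋₊ + 1) ^ 3 * (n + 1)) ^ 2 := by
  choose H hcard hH using fun i => exists_isHitter_permClassSingle i hη hη1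
  obtain ⟨g, hg⟩ : ∃ g, IsSampler (permClassSingle n) (glued H n) g (4 * η) := by
    refine exists_isSampler ?_
    rintro _ ⟨w, B, hB, hacc, rfl⟩ _ ⟨w', B', hB', hacc', rfl⟩ hQ
    have h := OBP.acceptFrac_le_of_agree hB hB' hacc hacc'.le (fun i _ => hH i)
      (fun x hx h => hQ x hx ▸ h) (by positivity)
    linarith
  refine ⟨glued H n, g, hg, card_glued_le fun i hi => (hcard i).trans ?_⟩
  gcongr

theorem query_bound_le_pow {n : ℕ} (hn : 1 ≤ n) {ε : ℝ} (hε : 0 < ε) (hε2 : ε < 1 / 2) :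
    3 * (n + 1) * (2 * (⌊1 / (ε / 4)⌋₊ + 1) ^ 3 * (n + 1)) ^ 2 ≤ ((n : ℝ) / ε) ^ 31 := by
  set N := (n : ℝ) / ε
  have hn1 : (1 : ℝ) ≤ n := by exact_mod_cast hn
  have hnN : (n : ℝ) + 1 ≤ N := by
    rw [le_div_iff₀ hε]
    nlinarith
  have hN : 2 ≤ N := by linarith
  have hεN : 1 / ε ≤ N := div_le_div_of_nonneg_right hn1 hε.le
  have hw : (⌊1 / (ε / 4)⌋₊ : ℝ) + 1 ≤ N ^ 4 :=
    calc (⌊1 / (ε / 4)⌋₊ : ℝ) + 1 ≤ 1 / (ε / 4) + 1 := by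
          gcongr
          exact Nat.floor_le (by positivity)
      _ = 4 * (1 / ε) + 1 := by field_simp
      _ ≤ 4 * N + 1 := by gcongr
      _ ≤ 2 ^ 3 * N := by linarith
      _ ≤ N ^ 3 * N := by gcongr
      _ = N ^ 4 := by ring
  calc 3 * ((n : ℝ) + 1) * (2 * (⌊1 / (ε / 4)⌋₊ + 1) ^ 3 * (n + 1)) ^ 2
      ≤ N ^ 2 * N * (N * (N ^ 4) ^ 3 * N) ^ 2 := by
        gcongr
        nlinarith
    _ = N ^ 31 := by ring

/-- There is a deterministic nonadaptive `ε`-sampler for unbounded-width permutation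
branching programs with a single accept state, with query complexity `poly(n/ε)`. -/
theorem stmt0 :
    ∃ C : ℝ, 0 < C ∧ ∀ n : ℕ, 1 ≤ n → ∀ ε : ℝ, 0 < ε → ε < 1 →
      ∃ (Q : Finset (Fin n → Bool)) (g : ((Fin n → Bool) → Bool) → ℝ),
        IsSampler (permClassSingle n) Q g ε ∧ (Q.card : ℝ) ≤ ((n : ℝ) / ε) ^ C := by
  refine ⟨31, by norm_num, fun n hn ε hε _ => ?_⟩
  rcases le_or_gt (1 / 2) ε with hlarge | hsmall
  · exact ⟨∅, fun _ => 1 / 2, isSampler_empty hlarge, by rw [card_empty, Nat.cast_zero]; positivity⟩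
  · obtain ⟨Q, g, hg, hQ⟩ := exists_isSampler_permClassSingle n (η := ε / 4)
      (by positivity) (by linarith)
    refine ⟨Q, g, by convert hg using 1; ring, ?_⟩
    have hQ' : (#Q : ℝ) ≤ 3 * (n + 1) * (2 * (⌊1 / (ε / 4)⌋₊ + 1) ^ 3 * (n + 1)) ^ 2 := by
      exact_mod_cast hQ
    exact_mod_cast hQ'.trans (query_bound_le_pow hn hε hsmall)
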